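/- Let β be an irrational number that is not Liouville, i.e. there exists τ > 0 such that ‖qβ‖ ≥ q^{−τ} for all sufficiently large integers q, and let γ₂ be a real number. Define ψ(q) = 1/(q · log q · (log log q)²) for q ≥ 4 and let B = {q ≥ 4 : ‖qβ − γ₂‖ ≥ 1/log q}. Then ∑_{q ∈ B} ψ(q)/‖qβ − γ₂‖ = ∞. -/

import Mathlib

open Filter

/-- Distance from a real number to the nearest integer. -/
noncomputable def dnint (x : ℝ) : ℝ := |x - round x|

/-!
By Dirichlet's theorem there is a fraction `p / r` with `r ≤ 2 ^ m` and
`|β - p / r| ≤ 1 / ((2 ^ m + 1) r)`. Since `β` stays within `1 / r²` of `p / r`, any `r` consecutive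
points `θ + jβ` visit every residue class `i / r` modulo `1` up to an error `2 / r`. The reciprocals
of those distances to the nearest integer that are at least `δ` therefore sum to
`≫ r ∑ 1 / i ≫ r log (1 / δ)`, provided `r ≥ 2 / δ`. Cutting the dyadic block `[2 ^ m, 2 ^ (m + 1))`
into runs of length `r` gives `≫ 2 ^ m log (1 / δ)` for the whole block.

We have `‖rβ‖ < 2 ^ (-m)`, so the Diophantine hypothesis forces `r` to exceed a power of `m`, and
`δ = (m + 1) ^ (-a)` is admissible for a suitable `0 < a < 1`. As `δ ≥ 1 / m ≥ 1 / log q`, the block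
contributes `≫ ψ(2 ^ (m + 1)) 2 ^ m log m ≫ 1 / (m log m)`, whose sum over `m` diverges.
-/

/-! ### Distance to the nearest integer -/

theorem dnint_nonneg (x : ℝ) : 0 ≤ dnint x := abs_nonneg _

theorem dnint_le_abs_sub_intCast (x : ℝ) (k : ℤ) : dnint x ≤ |x - k| := round_le x k

theorem dnint_le_dnint_add_abs_sub (x y : ℝ) (k : ℤ) : dnint y ≤ dnint x + |x - k - y| :=
  calc dnint y ≤ |y - ((round x - k : ℤ) : ℝ)| := dnint_le_abs_sub_intCast y _
    _ = |(x - round x) - (x - k - y)| := by push_cast; ring_nf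
    _ ≤ |x - round x| + |x - k - y| := abs_sub _ _

theorem dnint_natCast_div_of_two_mul_le {i n : ℕ} (h : 2 * i ≤ n) :
    dnint ((i : ℝ) / n) = i / n := by
  rcases n.eq_zero_or_pos with rfl | hn
  · simp [dnint]
  · rw [dnint, abs_sub_round_div_natCast_eq, Nat.mod_eq_of_lt (by lia), min_eq_left (by lia)]

theorem dnint_natCast_mul_pos {β : ℝ} (hβ : Irrational β) {q : ℕ} (hq : 0 < q) :
    0 < dnint (q * β) :=
  abs_pos.2 <| sub_ne_zero.2 <| (hβ.natCast_mul hq.ne').ne_int _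

theorem irrational_of_eventually_dnint_pos {β : ℝ} (h : ∀ᶠ q : ℕ in atTop, 0 < dnint (q * β)) :
    Irrational β := by
  rintro ⟨p, rfl⟩
  obtain ⟨N, hN⟩ := eventually_atTop.1 h
  refine (hN (N * p.den) (Nat.le_mul_of_pos_right N p.den_pos)).ne' ?_
  have hint : ((N * p.den : ℕ) : ℝ) * p = ((N * p.num : ℤ) : ℝ) := by
    exact_mod_cast (by rw [mul_assoc, mul_comm (p.den : ℚ), Rat.mul_den_eq_num] :
      (N * p.den : ℚ) * p = N * p.num)
  rw [hint, dnint, round_intCast, sub_self, abs_zero]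

/-! ### Sums and series -/

theorem log_div_le_sum_Ico_inv {a : ℕ} (ha : 0 < a) (b : ℕ) :
    Real.log (b / a) ≤ ∑ i ∈ Finset.Ico a b, (i : ℝ)⁻¹ := by
  have ha' : (0 : ℝ) < a := Nat.cast_pos.2 ha
  rcases le_total a b with hab | hba
  · have hab' : (a : ℝ) ≤ b := Nat.cast_le.2 hab
    rw [← integral_inv_of_pos ha' (ha'.trans_le hab')]
    refine AntitoneOn.integral_le_sum_Ico hab fun x hx y _ hxy => ?_
    exact inv_anti₀ (ha'.trans_le hx.1) hxy
  · rw [Finset.Ico_eq_empty_of_le hba, Finset.sum_empty]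
    exact Real.log_nonpos (by positivity) ((div_le_one ha').2 (Nat.cast_le.2 hba))

theorem not_summable_inv_mul_log : ¬ Summable fun n : ℕ => ((n : ℝ) * Real.log n)⁻¹ := by
  rw [← summable_condensed_iff_of_eventually_nonneg]
  · have hcond : (fun k : ℕ => (2 : ℝ) ^ k * (((2 ^ k : ℕ) : ℝ) * Real.log (2 ^ k : ℕ))⁻¹) =
        fun k : ℕ => (k : ℝ)⁻¹ * (Real.log 2)⁻¹ := by
      funext k
      rw [Nat.cast_pow, Nat.cast_ofNat, Real.log_pow, mul_inv,
        mul_inv_cancel_left₀ (by positivity), mul_inv]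
    rw [hcond, summable_mul_right_iff (inv_ne_zero (Real.log_pos one_lt_two).ne')]
    exact Real.not_summable_natCast_inv
  · exact Eventually.of_forall fun n =>
      inv_nonneg.2 (mul_nonneg n.cast_nonneg (Real.log_natCast_nonneg n))
  · filter_upwards [eventually_ge_atTop 2] with n hn
    have hlog : 0 < Real.log n := Real.log_pos (by exact_mod_cast hn)
    gcongr <;> simp

theorem summable_sum_Ico {f : ℕ → ℝ} (hf : ∀ n, 0 ≤ f n) (hs : Summable f) {u : ℕ → ℕ}
    (hu : Monotone u) : Summable fun n => ∑ i ∈ Finset.Ico (u n) (u (n + 1)), f i := by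
  refine summable_of_sum_range_le (c := ∑' i, f i)
    (fun n => Finset.sum_nonneg fun i _ => hf i) fun n => ?_
  have htele : ∑ k ∈ Finset.range n, ∑ i ∈ Finset.Ico (u k) (u (k + 1)), f i =
      ∑ i ∈ Finset.Ico (u 0) (u n), f i := by
    induction n with
    | zero => simp
    | succ n ih =>
      rw [Finset.sum_range_succ, ih, Finset.sum_Ico_consecutive f (hu n.zero_le) (hu n.le_succ)]
  exact htele.trans_le (hs.sum_le_tsum _ fun i _ => hf i)

theorem tendsto_sum_Icc_atTop_of_not_summable {f : ℕ → ℝ} (hf : ∀ n, 0 ≤ f n)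
    (hs : ¬ Summable f) (a : ℕ) :
    Tendsto (fun n => ∑ i ∈ Finset.Icc a n, f i) atTop atTop := by
  have hshift : Tendsto (fun n => ∑ i ∈ Finset.range n, f (a + i)) atTop atTop := by
    rw [← not_summable_iff_tendsto_nat_atTop_of_nonneg fun n => hf _]
    simpa only [add_comm a, summable_nat_add_iff] using hs
  refine (hshift.comp (tendsto_sub_atTop_nat a |>.comp (tendsto_add_atTop_nat 1))).congr fun n => ?_
  rw [← Finset.Ico_succ_right_eq_Icc, Finset.sum_Ico_eq_sum_range]
  rfl

theorem mul_le_sum_range_mul {f : ℕ → ℝ} {r : ℕ} {A : ℝ}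
    (h : ∀ s, A ≤ ∑ j ∈ Finset.range r, f (s + j)) (L : ℕ) :
    L * A ≤ ∑ q ∈ Finset.range (L * r), f q := by
  induction L with
  | zero => simp
  | succ L ih =>
    rw [add_one_mul L r, Finset.sum_range_add, Nat.cast_succ, add_one_mul]
    exact add_le_add ih (h _)

/-! ### Equidistribution over one period of a convergent -/

theorem exists_injOn_add_mul_modEq {n : ℕ} [NeZero n] {a : ℤ} (h : IsCoprime a n) (t : ℤ) :
    ∃ j : ℕ → ℕ, Set.InjOn j (Set.Iio n) ∧ ∀ i, j i < n ∧ t + j i * a ≡ i [ZMOD n] := by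
  obtain ⟨u, v, huv⟩ := h
  have hua : (u : ZMod n) * a = 1 := by
    simpa using congr_arg (Int.cast : ℤ → ZMod n) huv
  let j : ℕ → ℕ := fun i => ((i - t) * u : ZMod n).val
  have hj : ∀ i, t + j i * a ≡ i [ZMOD n] := fun i => by
    rw [← ZMod.intCast_eq_intCast_iff]
    push_cast
    rw [ZMod.natCast_zmod_val, mul_assoc, hua, mul_one, add_sub_cancel]
  refine ⟨j, fun i hi i' hi' hii' => ?_, fun i => ⟨ZMod.val_lt _, hj i⟩⟩
  have hmod : i ≡ i' [MOD n] := by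
    rw [← Int.natCast_modEq_iff]
    exact (hj i).symm.trans (hii' ▸ hj i')
  exact hmod.eq_of_lt_of_lt hi hi'

theorem exists_injOn_abs_sub_div_den_le {β : ℝ} {p : ℚ} (hp : |β - p| ≤ 1 / (p.den : ℝ) ^ 2)
    (θ : ℝ) :
    ∃ j : ℕ → ℕ, Set.InjOn j (Set.Iio p.den) ∧
      ∀ i, j i < p.den ∧ ∃ k : ℤ, |θ + j i * β - k - i / p.den| ≤ 2 / p.den := by
  have hr : (0 : ℝ) < p.den := Nat.cast_pos.2 p.den_pos
  have : NeZero p.den := ⟨p.den_nz⟩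
  obtain ⟨j, hinj, hj⟩ := exists_injOn_add_mul_modEq
    (Int.isCoprime_iff_gcd_eq_one.2 p.reduced) (round (θ * p.den))
  refine ⟨j, hinj, fun i => ⟨(hj i).1, ?_⟩⟩
  obtain ⟨k, hk⟩ := (hj i).2.symm.dvd
  refine ⟨k, ?_⟩
  have hk' : (round (θ * p.den) : ℝ) + j i * p.num - i = p.den * k := by exact_mod_cast hk
  have hnum : (p : ℝ) * p.den = p.num := by exact_mod_cast Rat.mul_den_eq_num p
  have hround : |θ * p.den - round (θ * p.den)| ≤ 1 :=
    (abs_sub_round _).trans (by norm_num)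
  have hdrift : |j i * (β - p) * p.den| ≤ 1 := by
    rw [abs_mul, abs_mul, Nat.abs_cast, Nat.abs_cast]
    calc (j i : ℝ) * |β - p| * p.den ≤ p.den * (1 / (p.den : ℝ) ^ 2) * p.den := by
          gcongr; exact (hj i).1.le
      _ = 1 := by field_simp
  have hsplit : (θ + j i * β - k - i / p.den) * p.den =
      (θ * p.den - round (θ * p.den)) + j i * (β - p) * p.den := by
    field_simp
    linear_combination hk' + j i * hnum
  rw [le_div_iff₀ hr, ← abs_of_pos hr, ← abs_mul, abs_of_pos hr, hsplit]
  linarith [abs_add_le (θ * p.den - round (θ * p.den)) (j i * (β - p) * p.den)]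

/-! ### Sums of truncated reciprocals -/

/-- The reciprocal `1 / ‖x‖` of the distance to the nearest integer, cut off to `0` where
`‖x‖ < δ`. -/
noncomputable def truncInvDnint (δ x : ℝ) : ℝ := if δ ≤ dnint x then (dnint x)⁻¹ else 0

theorem truncInvDnint_nonneg (δ x : ℝ) : 0 ≤ truncInvDnint δ x :=
  ite_nonneg (inv_nonneg.2 (dnint_nonneg x)) le_rfl

theorem truncInvDnint_antitone (x : ℝ) : Antitone fun δ => truncInvDnint δ x := by
  intro δ δ' hδ
  by_cases h : δ' ≤ dnint x
  · simp only [truncInvDnint, if_pos h, if_pos (hδ.trans h), le_refl]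
  · simpa only [truncInvDnint, if_neg h] using truncInvDnint_nonneg δ x

theorem inv_le_truncInvDnint {δ x c : ℝ} (hδ : 0 < δ) (hδx : δ ≤ dnint x) (hxc : dnint x ≤ c) :
    c⁻¹ ≤ truncInvDnint δ x := by
  rw [truncInvDnint, if_pos hδx]
  exact inv_anti₀ (hδ.trans_le hδx) hxc

theorem log_le_sum_Ico_ceil_inv {δ : ℝ} (hδ : 0 < δ) {r : ℕ} (hr : 2 ≤ δ * r) :
    Real.log (1 / (8 * δ)) ≤ ∑ i ∈ Finset.Ico ⌈2 * δ * r⌉₊ (r / 2 + 1), (i : ℝ)⁻¹ := by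
  have hceil_pos : 0 < ⌈2 * δ * r⌉₊ := Nat.ceil_pos.2 (by linarith)
  have hceil_le : (⌈2 * δ * r⌉₊ : ℝ) ≤ 4 * δ * r := by
    linarith [Nat.ceil_lt_add_one (show 0 ≤ 2 * δ * r by linarith)]
  have hhalf : (r : ℝ) / 2 ≤ (r / 2 + 1 : ℕ) := by
    have : (r : ℝ) ≤ 2 * (r / 2 + 1 : ℕ) := by exact_mod_cast (by lia : r ≤ 2 * (r / 2 + 1))
    linarith
  refine le_trans (Real.log_le_log (by positivity) ?_) (log_div_le_sum_Ico_inv hceil_pos _)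
  rw [div_le_div_iff₀ (by positivity) (Nat.cast_pos.2 hceil_pos)]
  calc 1 * (⌈2 * δ * r⌉₊ : ℝ) ≤ 4 * δ * r := by rwa [one_mul]
    _ = r / 2 * (8 * δ) := by ring
    _ ≤ (r / 2 + 1 : ℕ) * (8 * δ) := by gcongr

theorem div_le_truncInvDnint_of_abs_sub_le {δ : ℝ} (hδ : 0 < δ) {i r : ℕ} (hr : 2 ≤ δ * r)
    (hi : ⌈2 * δ * r⌉₊ ≤ i) (hir : 2 * i ≤ r) {x : ℝ} {k : ℤ}
    (hx : |x - k - (i : ℝ) / r| ≤ 2 / r) :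
    r / 2 * (i : ℝ)⁻¹ ≤ truncInvDnint δ x := by
  have hr_pos : (0 : ℝ) < r := pos_of_mul_pos_right (by linarith) hδ.le
  have hi' : 2 * δ * r ≤ i := (Nat.le_ceil _).trans (Nat.cast_le.2 hi)
  have hlower : δ ≤ i / r - 2 / r := by
    rw [← sub_div, le_div_iff₀ hr_pos]
    linarith
  have hupper : i / r + 2 / r ≤ 2 * i / (r : ℝ) := by
    rw [← add_div]
    gcongr
    linarith
  have hgrid := dnint_le_dnint_add_abs_sub x ((i : ℝ) / r) k
  rw [dnint_natCast_div_of_two_mul_le hir] at hgrid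
  have hdist : dnint x ≤ i / r + 2 / r :=
    calc dnint x ≤ |x - k| := dnint_le_abs_sub_intCast x k
      _ = |(i : ℝ) / r + (x - k - i / r)| := by rw [add_sub_cancel]
      _ ≤ |(i : ℝ) / r| + |x - k - i / r| := abs_add_le _ _
      _ ≤ i / r + 2 / r := by
        rw [abs_of_nonneg (by positivity)]
        gcongr
  calc r / 2 * (i : ℝ)⁻¹ = (2 * i / (r : ℝ))⁻¹ := by rw [inv_div]; ring
    _ ≤ truncInvDnint δ x :=
      inv_le_truncInvDnint hδ (by linarith) (hdist.trans hupper)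

theorem den_div_two_mul_log_le_sum_truncInvDnint {β : ℝ} {p : ℚ}
    (hp : |β - p| ≤ 1 / (p.den : ℝ) ^ 2) (θ : ℝ) {δ : ℝ} (hδ : 0 < δ) (hr : 2 ≤ δ * p.den) :
    p.den / 2 * Real.log (1 / (8 * δ)) ≤
      ∑ q ∈ Finset.range p.den, truncInvDnint δ (θ + q * β) := by
  obtain ⟨j, hinj, hj⟩ := exists_injOn_abs_sub_div_den_le hp θ
  set I := Finset.Ico ⌈2 * δ * p.den⌉₊ (p.den / 2 + 1)
  have hI_lt : ∀ i ∈ I, i < p.den := fun i hi => by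
    have := Finset.mem_Ico.1 hi
    have : 0 < ⌈2 * δ * p.den⌉₊ := Nat.ceil_pos.2 (by linarith)
    lia
  calc p.den / 2 * Real.log (1 / (8 * δ)) ≤ p.den / 2 * ∑ i ∈ I, (i : ℝ)⁻¹ := by
        gcongr
        exact log_le_sum_Ico_ceil_inv hδ hr
    _ ≤ ∑ i ∈ I, truncInvDnint δ (θ + j i * β) := by
        rw [Finset.mul_sum]
        refine Finset.sum_le_sum fun i hi => ?_
        obtain ⟨hi_ge, hi_lt⟩ := Finset.mem_Ico.1 hi
        obtain ⟨k, hk⟩ := (hj i).2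
        exact div_le_truncInvDnint_of_abs_sub_le hδ hr hi_ge (by lia) hk
    _ = ∑ q ∈ I.image j, truncInvDnint δ (θ + q * β) :=
        (Finset.sum_image (f := fun q : ℕ => truncInvDnint δ (θ + q * β))
          (hinj.mono hI_lt)).symm
    _ ≤ ∑ q ∈ Finset.range p.den, truncInvDnint δ (θ + q * β) :=
        Finset.sum_le_sum_of_subset_of_nonneg
          (Finset.image_subset_iff.2 fun i _ => Finset.mem_range.2 (hj i).1)
          fun _ _ _ => truncInvDnint_nonneg _ _

theorem exists_rat_abs_sub_le_and_dnint_den_mul_le (β : ℝ) {n : ℕ} (hn : 0 < n) :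
    ∃ p : ℚ, p.den ≤ n ∧ |β - p| ≤ 1 / (p.den : ℝ) ^ 2 ∧ dnint (p.den * β) ≤ 1 / (n + 1) := by
  obtain ⟨p, hp, hpn⟩ := Real.exists_rat_abs_sub_le_and_den_le β hn
  have hr : (0 : ℝ) < p.den := Nat.cast_pos.2 p.den_pos
  have hrn : (p.den : ℝ) ≤ n + 1 := by exact_mod_cast hpn.trans n.le_succ
  have hnum : (p : ℝ) * p.den = p.num := by exact_mod_cast Rat.mul_den_eq_num p
  refine ⟨p, hpn, hp.trans ?_, ?_⟩
  · rw [sq]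
    gcongr
  · calc dnint (p.den * β) ≤ |p.den * β - p.num| := dnint_le_abs_sub_intCast _ _
      _ = |β - p| * p.den := by rw [← hnum, ← abs_of_pos hr, ← abs_mul, abs_of_pos hr]; ring_nf
      _ ≤ 1 / ((n + 1) * p.den) * p.den := by gcongr
      _ = 1 / (n + 1) := by field_simp

theorem div_four_mul_log_le_sum_truncInvDnint {β δ : ℝ} (hδ : 0 < δ) {n : ℕ}
    (hn : 0 < n) (hβ : ∀ r : ℕ, 0 < r → dnint (r * β) ≤ 1 / (n + 1) → 2 ≤ δ * r) (θ : ℝ) :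
    n / 4 * Real.log (1 / (8 * δ)) ≤ ∑ q ∈ Finset.range n, truncInvDnint δ (θ + q * β) := by
  have hsum_nonneg : 0 ≤ ∑ q ∈ Finset.range n, truncInvDnint δ (θ + q * β) :=
    Finset.sum_nonneg fun _ _ => truncInvDnint_nonneg _ _
  rcases le_total (Real.log (1 / (8 * δ))) 0 with hlog | hlog
  · exact (mul_nonpos_of_nonneg_of_nonpos (by positivity) hlog).trans hsum_nonneg
  obtain ⟨p, hpn, hp, hpβ⟩ := exists_rat_abs_sub_le_and_dnint_den_mul_le β hn
  have hr := hβ p.den p.den_pos hpβ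
  set L := n / p.den
  have hhalf : (n : ℝ) / 2 ≤ L * p.den := by
    have hlt : n < (L + 1) * p.den := Nat.lt_mul_of_div_lt (Nat.lt_succ_self _) p.den_pos
    have hL_pos : 1 ≤ L := (Nat.one_le_div_iff p.den_pos).2 hpn
    have : (n : ℝ) ≤ 2 * (L * p.den) := by exact_mod_cast (by nlinarith : n ≤ 2 * (L * p.den))
    linarith
  calc n / 4 * Real.log (1 / (8 * δ)) = n / 2 * (Real.log (1 / (8 * δ)) / 2) := by ring
    _ ≤ L * p.den * (Real.log (1 / (8 * δ)) / 2) := by gcongr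
    _ = L * (p.den / 2 * Real.log (1 / (8 * δ))) := by ring
    _ ≤ ∑ q ∈ Finset.range (L * p.den), truncInvDnint δ (θ + q * β) := by
        refine mul_le_sum_range_mul (fun s => ?_) L
        refine (den_div_two_mul_log_le_sum_truncInvDnint hp (θ + s * β) hδ hr).trans_eq ?_
        simp only [Nat.cast_add, add_mul, add_assoc]
    _ ≤ ∑ q ∈ Finset.range n, truncInvDnint δ (θ + q * β) :=
        Finset.sum_le_sum_of_subset_of_nonneg
          (Finset.range_subset_range.2 (Nat.div_mul_le_self n p.den))
          fun _ _ _ => truncInvDnint_nonneg _ _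

/-! ### Consequences of the Diophantine condition -/

theorem tendsto_natCast_add_one_atTop : Tendsto (fun m : ℕ => (m : ℝ) + 1) atTop atTop :=
  tendsto_atTop_add_const_right _ _ tendsto_natCast_atTop_atTop

theorem eventually_rpow_le_mul {a : ℝ} (ha : a < 1) {c : ℝ} (hc : 0 < c) :
    ∀ᶠ x : ℝ in atTop, x ^ a ≤ c * x := by
  filter_upwards [(tendsto_rpow_atTop (sub_pos.2 ha)).eventually_ge_atTop c⁻¹,
    eventually_gt_atTop 0] with x hx hx_pos
  calc x ^ a = c * (x ^ a * c⁻¹) := by field_simp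
    _ ≤ c * (x ^ a * x ^ (1 - a)) := by gcongr
    _ = c * x := by rw [← Real.rpow_add hx_pos, add_sub_cancel, Real.rpow_one]

theorem eventually_half_mul_log_le_log {a : ℝ} (ha : 0 < a) :
    ∀ᶠ x : ℝ in atTop, a / 2 * Real.log x ≤ Real.log (1 / (8 * x ^ (-a))) := by
  filter_upwards [(tendsto_rpow_atTop (half_pos ha)).eventually_ge_atTop 8,
    eventually_gt_atTop 0] with x hx hx_pos
  rw [← Real.log_rpow hx_pos]
  refine Real.log_le_log (by positivity) ?_
  rw [le_div_iff₀ (by positivity)]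
  calc x ^ (a / 2) * (8 * x ^ (-a)) ≤ x ^ (a / 2) * (x ^ (a / 2) * x ^ (-a)) := by gcongr
    _ = 1 := by
      rw [← mul_assoc, ← Real.rpow_add hx_pos, add_halves, ← Real.rpow_add hx_pos,
        add_neg_cancel, Real.rpow_zero]

theorem eventually_inv_natCast_le_rpow_neg {a : ℝ} (ha : a < 1) :
    ∀ᶠ m : ℕ in atTop, (m : ℝ)⁻¹ ≤ ((m : ℝ) + 1) ^ (-a) := by
  filter_upwards [tendsto_natCast_add_one_atTop.eventually (eventually_rpow_le_mul ha one_half_pos),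
    eventually_ge_atTop 1] with m hm hm1
  have hm1' : (1 : ℝ) ≤ m := Nat.one_le_cast.2 hm1
  rw [Real.rpow_neg (by positivity)]
  exact inv_anti₀ (by positivity) (by linarith)

theorem eventually_exp_neg_le_rpow_neg (τ : ℝ) :
    ∀ᶠ x : ℝ in atTop, Real.exp (-x) ≤ x ^ (-τ) := by
  filter_upwards [(isLittleO_exp_neg_mul_rpow_atTop one_pos (-τ)).bound one_pos,
    eventually_ge_atTop 0] with x hx hx_nonneg
  rwa [Real.norm_of_nonneg (Real.exp_nonneg _), Real.norm_of_nonneg (by positivity), one_mul,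
    neg_one_mul] at hx

theorem eventually_exp_neg_rpow_one_le_dnint {β τ : ℝ}
    (hβ : ∀ᶠ q : ℕ in atTop, (q : ℝ) ^ (-τ) ≤ dnint (q * β)) :
    ∀ᶠ q : ℕ in atTop, Real.exp (-(q : ℝ) ^ (1 : ℝ)) ≤ dnint (q * β) := by
  filter_upwards [hβ, tendsto_natCast_atTop_atTop.eventually (eventually_exp_neg_le_rpow_neg τ)]
    with q hq hexp
  rw [Real.rpow_one]
  exact hexp.trans hq

theorem eventually_forall_le_of_dnint_le {β : ℝ} (hβ : Irrational β) (N : ℕ) :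
    ∀ᶠ ε : ℝ in nhds 0, ∀ r : ℕ, 0 < r → dnint (r * β) ≤ ε → N ≤ r := by
  have hsmall : ∀ᶠ ε : ℝ in nhds 0, ∀ r ∈ Finset.Ico 1 N, ε < dnint (r * β) :=
    (eventually_all_finset _).2 fun r hr =>
      eventually_lt_nhds (dnint_natCast_mul_pos hβ (Finset.mem_Ico.1 hr).1)
  filter_upwards [hsmall] with ε hε r hr hrε
  by_contra! hrN
  exact (hε r (Finset.mem_Ico.2 ⟨hr, hrN⟩)).not_ge hrε

theorem eventually_two_mul_rpow_rpow_le_mul_log_two {a σ : ℝ} (ha : a * σ < 1) :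
    ∀ᶠ m : ℕ in atTop, (2 * ((m : ℝ) + 1) ^ a) ^ σ ≤ m * Real.log 2 := by
  filter_upwards [tendsto_natCast_add_one_atTop.eventually (eventually_rpow_le_mul ha
    (show 0 < Real.log 2 / (2 * 2 ^ σ) by positivity)), eventually_ge_atTop 1] with m hm hm1
  have hm1' : (1 : ℝ) ≤ m := Nat.one_le_cast.2 hm1
  calc (2 * ((m : ℝ) + 1) ^ a) ^ σ = 2 ^ σ * ((m : ℝ) + 1) ^ (a * σ) := by
        rw [Real.mul_rpow zero_le_two (by positivity), ← Real.rpow_mul (by positivity)]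
    _ ≤ 2 ^ σ * (Real.log 2 / (2 * 2 ^ σ) * (m + 1)) := by gcongr
    _ = (m + 1) / 2 * Real.log 2 := by field_simp
    _ ≤ m * Real.log 2 := by gcongr; linarith

theorem eventually_forall_two_mul_rpow_le_of_dnint_le {β σ : ℝ} (hσ : 0 < σ)
    (hβ : ∀ᶠ q : ℕ in atTop, Real.exp (-(q : ℝ) ^ σ) ≤ dnint (q * β)) {a : ℝ} (ha : a * σ < 1) :
    ∀ᶠ m : ℕ in atTop, ∀ r : ℕ, 0 < r → dnint (r * β) ≤ 1 / ((2 ^ m : ℕ) + 1) →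
      2 * ((m : ℝ) + 1) ^ a ≤ r := by
  have hirr : Irrational β :=
    irrational_of_eventually_dnint_pos (hβ.mono fun q hq => (Real.exp_pos _).trans_le hq)
  obtain ⟨N, hN⟩ := eventually_atTop.1 hβ
  have hε : Tendsto (fun m : ℕ => 1 / (((2 ^ m : ℕ) : ℝ) + 1)) atTop (nhds 0) :=
    tendsto_one_div_add_atTop_nhds_zero_nat.comp (tendsto_pow_atTop_atTop_of_one_lt one_lt_two)
  filter_upwards [hε.eventually (eventually_forall_le_of_dnint_le hirr N),
    eventually_two_mul_rpow_rpow_le_mul_log_two ha] with m hlarge hgrowth r hr hrm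
  by_contra! hr_lt
  have hexp : Real.exp (-(r : ℝ) ^ σ) < Real.exp (-(m * Real.log 2)) :=
    calc Real.exp (-(r : ℝ) ^ σ) ≤ 1 / ((2 ^ m : ℕ) + 1) := (hN r (hlarge r hr hrm)).trans hrm
      _ < 1 / (2 : ℝ) ^ m := by push_cast; gcongr; exact lt_add_one _
      _ = Real.exp (-(m * Real.log 2)) := by
        rw [Real.exp_neg, Real.exp_nat_mul, Real.exp_log two_pos, one_div]
  have hpow : (r : ℝ) ^ σ ≤ m * Real.log 2 :=
    (Real.rpow_le_rpow r.cast_nonneg hr_lt.le hσ.le).trans hgrowth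
  linarith [Real.exp_lt_exp.1 hexp]

/-! ### The series -/

/-- The approximating function `ψ(x) = 1 / (x log x (log log x)²)`, with base-2 logarithms. -/
noncomputable def psi (x : ℝ) : ℝ :=
  1 / (x * Real.logb 2 x * (Real.logb 2 (Real.logb 2 x)) ^ 2)

theorem psi_natCast_nonneg (q : ℕ) : 0 ≤ psi q := by
  have : 0 ≤ Real.logb 2 q := div_nonneg (Real.log_natCast_nonneg q) (Real.log_nonneg one_le_two)
  unfold psi
  positivity

theorem psi_antitoneOn : AntitoneOn psi (Set.Ioi 2) := by
  intro x hx y _ hxy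
  have hx_pos : 0 < x := two_pos.trans hx
  have hlog : 1 < Real.logb 2 x := by
    rwa [Real.lt_logb_iff_rpow_lt one_lt_two hx_pos, Real.rpow_one]
  have hlog_le : Real.logb 2 x ≤ Real.logb 2 y := Real.logb_le_logb_of_le one_lt_two hx_pos hxy
  have hloglog : 0 < Real.logb 2 (Real.logb 2 x) := Real.logb_pos one_lt_two hlog
  have hloglog_le : Real.logb 2 (Real.logb 2 x) ≤ Real.logb 2 (Real.logb 2 y) :=
    Real.logb_le_logb_of_le one_lt_two (one_pos.trans hlog) hlog_le
  have hlog_pos : 0 < Real.logb 2 x := one_pos.trans hlog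
  have hlogy_pos : 0 < Real.logb 2 y := hlog_pos.trans_le hlog_le
  have hy_pos : 0 < y := hx_pos.trans_le hxy
  unfold psi
  gcongr

theorem psi_two_pow (n : ℕ) : psi (2 ^ n) = Real.log 2 ^ 2 / (2 ^ n * n * Real.log n ^ 2) := by
  have hlog : Real.logb 2 ((2 : ℝ) ^ n) = n := by
    rw [Real.logb_pow, Real.logb_self_eq_one one_lt_two, mul_one]
  rw [psi, hlog, Real.logb, div_pow, mul_div_assoc', one_div_div]

/-- The `q`-th term of the series: `ψ(q) / ‖qβ - γ‖` if `‖qβ - γ‖ ≥ 1 / log q`, else `0`. -/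
noncomputable def truncTerm (β γ : ℝ) (q : ℕ) : ℝ :=
  psi q * truncInvDnint (Real.logb 2 q)⁻¹ (q * β - γ)

theorem truncTerm_nonneg (β γ : ℝ) (q : ℕ) : 0 ≤ truncTerm β γ q :=
  mul_nonneg (psi_natCast_nonneg q) (truncInvDnint_nonneg _ _)

theorem psi_mul_truncInvDnint_le_truncTerm (β γ : ℝ) {δ : ℝ} {m q : ℕ} (hm : 2 ≤ m)
    (hδ : (m : ℝ)⁻¹ ≤ δ) (hmq : 2 ^ m ≤ q) (hqm : q ≤ 2 ^ (m + 1)) :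
    psi (2 ^ (m + 1)) * truncInvDnint δ (q * β - γ) ≤ truncTerm β γ q := by
  have hm_pos : (0 : ℝ) < m := by positivity
  have hmq' : (2 : ℝ) ^ m ≤ q := by exact_mod_cast hmq
  have hqm' : (q : ℝ) ≤ 2 ^ (m + 1) := by exact_mod_cast hqm
  have hq : (2 : ℝ) < q :=
    calc (2 : ℝ) < 2 ^ 2 := by norm_num
      _ ≤ 2 ^ m := pow_le_pow_right₀ one_le_two hm
      _ ≤ q := hmq'
  have hlog : (m : ℝ) ≤ Real.logb 2 q := by
    rwa [Real.le_logb_iff_rpow_le one_lt_two (two_pos.trans hq), Real.rpow_natCast]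
  exact mul_le_mul (psi_antitoneOn hq (hq.trans_le hqm') hqm')
    (truncInvDnint_antitone _ ((inv_anti₀ hm_pos hlog).trans hδ))
    (truncInvDnint_nonneg _ _) (psi_natCast_nonneg q)

theorem psi_mul_sum_truncInvDnint_le_sum_truncTerm (β γ : ℝ) {δ : ℝ} {m : ℕ} (hm : 2 ≤ m)
    (hδ : (m : ℝ)⁻¹ ≤ δ) :
    psi (2 ^ (m + 1)) *
        ∑ q ∈ Finset.range (2 ^ m), truncInvDnint δ ((2 ^ m : ℕ) * β - γ + q * β) ≤
      ∑ q ∈ Finset.Ico (2 ^ m) (2 ^ (m + 1)), truncTerm β γ q := by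
  have hlen : 2 ^ (m + 1) - 2 ^ m = 2 ^ m := by rw [pow_succ]; lia
  rw [Finset.sum_Ico_eq_sum_range, hlen, Finset.mul_sum]
  refine Finset.sum_le_sum fun q hq => ?_
  have hq' := Finset.mem_range.1 hq
  have hshift : ((2 ^ m : ℕ) : ℝ) * β - γ + q * β = (2 ^ m + q : ℕ) * β - γ := by
    push_cast
    ring
  rw [hshift]
  exact psi_mul_truncInvDnint_le_truncTerm β γ hm hδ (Nat.le_add_right _ _) (by lia)

theorem psi_mul_log_le_sum_truncTerm {β δ : ℝ} (γ : ℝ) {m : ℕ} (hm : 2 ≤ m) (hδ : (m : ℝ)⁻¹ ≤ δ)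
    (hβ : ∀ r : ℕ, 0 < r → dnint (r * β) ≤ 1 / ((2 ^ m : ℕ) + 1) → 2 ≤ δ * r) :
    psi (2 ^ (m + 1)) * (2 ^ m / 4 * Real.log (1 / (8 * δ))) ≤
      ∑ q ∈ Finset.Ico (2 ^ m) (2 ^ (m + 1)), truncTerm β γ q := by
  have hδ_pos : 0 < δ := lt_of_lt_of_le (by positivity) hδ
  have hpsi : 0 ≤ psi (2 ^ (m + 1)) := by exact_mod_cast psi_natCast_nonneg (2 ^ (m + 1))
  refine le_trans ?_ (psi_mul_sum_truncInvDnint_le_sum_truncTerm β γ hm hδ)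
  gcongr
  exact_mod_cast div_four_mul_log_le_sum_truncInvDnint hδ_pos (Nat.two_pow_pos m) hβ _

theorem exists_eventually_mul_inv_mul_log_le_sum_truncTerm {β σ : ℝ} (hσ : 0 < σ)
    (hβ : ∀ᶠ q : ℕ in atTop, Real.exp (-(q : ℝ) ^ σ) ≤ dnint (q * β)) (γ : ℝ) :
    ∃ c > 0, ∀ᶠ m : ℕ in atTop,
      c * (((m + 1 : ℕ) : ℝ) * Real.log (m + 1 : ℕ))⁻¹ ≤
        ∑ q ∈ Finset.Ico (2 ^ m) (2 ^ (m + 1)), truncTerm β γ q := by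
  -- For `δ = (m + 1) ^ (-a)`, `a < 1` gives `1 / m ≤ δ`, and `a * σ < 1` gives `2 / δ ≤ r`.
  obtain ⟨a, ha_pos, ha_lt⟩ : ∃ a, 0 < a ∧ a < min 1 σ⁻¹ :=
    exists_between (lt_min one_pos (inv_pos.2 hσ))
  have haσ : a * σ < 1 := by
    simpa only [inv_mul_cancel₀ hσ.ne'] using
      mul_lt_mul_of_pos_right (ha_lt.trans_le (min_le_right _ _)) hσ
  refine ⟨a * Real.log 2 ^ 2 / 16, by positivity, ?_⟩
  filter_upwards [eventually_forall_two_mul_rpow_le_of_dnint_le hσ hβ haσ,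
    eventually_inv_natCast_le_rpow_neg (ha_lt.trans_le (min_le_left _ _)),
    tendsto_natCast_add_one_atTop.eventually (eventually_half_mul_log_le_log ha_pos),
    eventually_ge_atTop 2] with m hden hδ hlog hm
  have hlogm : 0 < Real.log ((m + 1 : ℕ) : ℝ) := Real.log_pos (by exact_mod_cast (by lia))
  have hpsi : 0 ≤ psi (2 ^ (m + 1)) := by exact_mod_cast psi_natCast_nonneg (2 ^ (m + 1))
  calc a * Real.log 2 ^ 2 / 16 * (((m + 1 : ℕ) : ℝ) * Real.log (m + 1 : ℕ))⁻¹
      = psi (2 ^ (m + 1)) * (2 ^ m / 4 * (a / 2 * Real.log (m + 1 : ℕ))) := by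
        rw [psi_two_pow, pow_succ]
        field_simp
        ring
    _ ≤ psi (2 ^ (m + 1)) * (2 ^ m / 4 * Real.log (1 / (8 * ((m : ℝ) + 1) ^ (-a)))) := by
        push_cast at hlog ⊢
        gcongr
    _ ≤ ∑ q ∈ Finset.Ico (2 ^ m) (2 ^ (m + 1)), truncTerm β γ q := by
        refine psi_mul_log_le_sum_truncTerm γ hm hδ fun r hr hrβ => ?_
        rw [Real.rpow_neg (by positivity), inv_mul_eq_div, le_div_iff₀ (by positivity)]
        exact hden r hr hrβ

theorem not_summable_truncTerm {β σ : ℝ} (hσ : 0 < σ)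
    (hβ : ∀ᶠ q : ℕ in atTop, Real.exp (-(q : ℝ) ^ σ) ≤ dnint (q * β)) (γ : ℝ) :
    ¬ Summable (truncTerm β γ) := by
  intro hs
  obtain ⟨c, hc, hblock⟩ := exists_eventually_mul_inv_mul_log_le_sum_truncTerm hσ hβ γ
  have hblocks := summable_sum_Ico (truncTerm_nonneg β γ) hs
    (pow_right_mono₀ (one_le_two : 1 ≤ 2))
  have hdom : Summable fun m : ℕ => c * (((m + 1 : ℕ) : ℝ) * Real.log (m + 1 : ℕ))⁻¹ := by
    refine hblocks.of_norm_bounded_eventually_nat (hblock.mono fun m hm => ?_)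
    rwa [Real.norm_of_nonneg]
    have := Real.log_natCast_nonneg (m + 1)
    positivity
  rw [summable_mul_left_iff hc.ne',
    summable_nat_add_iff (f := fun n : ℕ => ((n : ℝ) * Real.log n)⁻¹) 1] at hdom
  exact not_summable_inv_mul_log hdom

theorem stmt18_general {β σ : ℝ} (hσ : 0 < σ)
    (hβ : ∀ᶠ q : ℕ in atTop, Real.exp (-(q : ℝ) ^ σ) ≤ dnint (q * β)) (γ₂ : ℝ) :
    Tendsto (fun Q : ℕ => ∑ q ∈ (Finset.Icc 4 Q).filter
        (fun q : ℕ => (Real.logb 2 q)⁻¹ ≤ dnint (q * β - γ₂)),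
        (1 / ((q : ℝ) * Real.logb 2 q * (Real.logb 2 (Real.logb 2 q)) ^ 2))
          / dnint ((q : ℝ) * β - γ₂))
      atTop atTop := by
  refine (tendsto_sum_Icc_atTop_of_not_summable (truncTerm_nonneg β γ₂)
    (not_summable_truncTerm hσ hβ γ₂) 4).congr fun Q => ?_
  simp only [truncTerm, truncInvDnint, psi, mul_ite, mul_zero, Finset.sum_filter, div_eq_mul_inv]

open Classical in
theorem stmt18 (β : ℝ) (hβ : Irrational β)
    (hNL : ∃ τ > (0:ℝ), ∃ N : ℕ, ∀ q : ℕ, N ≤ q → (q : ℝ) ^ (-τ) ≤ dnint (q * β))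
    (γ₂ : ℝ) :
    Tendsto (fun Q : ℕ => ∑ q ∈ (Finset.Icc 4 Q).filter
        (fun q : ℕ => (Real.logb 2 q)⁻¹ ≤ dnint (q * β - γ₂)),
        (1 / ((q : ℝ) * Real.logb 2 q * (Real.logb 2 (Real.logb 2 q)) ^ 2))
          / dnint ((q : ℝ) * β - γ₂))
      atTop atTop := by
  obtain ⟨τ, -, hN⟩ := hNL
  exact stmt18_general one_pos (eventually_exp_neg_rpow_one_le_dnint (eventually_atTop.2 hN)) γ₂
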